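/- Let Ω = (a,b) ⊂ ℝ be a bounded open interval with a < b, let D > 0, T > 0, let Γ ∈ C¹([0,∞)), and let u, ũ, Θ, Θ̃ be real-valued C^∞ functions on [a,b] × [0,T] with Θ ≥ 0 and Θ̃ ≥ 0, such that Θ_t = D Θ_xx + Γ(Θ) u_xt² and Θ̃_t = D Θ̃_xx + Γ(Θ̃) ũ_xt² in Ω × (0,T), and Θ_x = Θ̃_x = 0 at x = a and x = b for all t ∈ (0,T). Suppose moreover that there are constants c₁, c₅, c₁₈, c₁₉, c₂₀ > 0 such that |ũ_xt| ≤ c₁, |u_xt| ≤ c₁₈, 0 ≤ Θ ≤ c₅ and 0 ≤ Θ̃ ≤ c₅ on [a,b] × (0,T), and |Γ(ξ)| ≤ c₁₉ and |Γ'(ξ)| ≤ c₂₀ for all ξ ∈ [0,c₅]. Set δ := Θ − Θ̃, d := u − ũ and c₂₁ := c₂₀ c₁² + c₁₉² (c₁₈ + c₁)²/4. Then for every t ∈ (0,T): (1/2) d/dt ∫_a^b δ² + D ∫_a^b δ_x² ≤ ∫_a^b d_xt² + c₂₁ ∫_a^b δ². -/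

import Mathlib

/-!
The proof is the standard energy estimate. Since all functions are smooth, one may differentiate
under the integral sign (`hasDerivAt_half_integral_sq`), so the time derivative of
`(1/2) ∫ δ²` is `∫ δ δ_t`. The Neumann conditions kill the boundary terms in the integration by
parts `∫ δ δ_xx = -∫ δ_x²` (`integral_mul_pdx_pdx`), and the left-hand side of the claim becomes
`∫ δ (δ_t - D δ_xx)`. By the two heat equations the integrand is
`δ (Γ(Θ) u_xt² - Γ(Θ̃) ũ_xt²)`, which is split as
`δ Γ(Θ) (u_xt + ũ_xt) d_xt + δ (Γ(Θ) - Γ(Θ̃)) ũ_xt²`. Young's inequality bounds the first summand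
and the Lipschitz bound for `Γ` on `[0, c₅]` the second (`source_bound`), and the resulting
pointwise inequality is integrated over `(a, b)`.
-/

open MeasureTheory Set

/-- Partial derivative in the space variable. -/
noncomputable def pdx (f : ℝ → ℝ → ℝ) : ℝ → ℝ → ℝ := fun x t => deriv (fun y => f y t) x

/-- Partial derivative in the time variable. -/
noncomputable def pdt (f : ℝ → ℝ → ℝ) : ℝ → ℝ → ℝ := fun x t => deriv (fun s => f x s) t

theorem contDiff_pdx {f : ℝ → ℝ → ℝ} (hf : ContDiff ℝ (⊤ : ℕ∞) (Function.uncurry f)) :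
    ContDiff ℝ (⊤ : ℕ∞) (Function.uncurry (pdx f)) := by
  have h : Function.uncurry (pdx f) = fun p => fderiv ℝ (Function.uncurry f) p (1, 0) := by
    ext ⟨x, t⟩
    have h1 : HasFDerivAt (Function.uncurry f) (fderiv ℝ (Function.uncurry f) (x, t)) (x, t) :=
      (hf.differentiable (by simp) _).hasFDerivAt
    have h2 : HasDerivAt (fun y : ℝ => (y, t)) ((1 : ℝ), (0 : ℝ)) x :=
      (hasDerivAt_id x).prodMk (hasDerivAt_const x t)
    exact (h1.comp_hasDerivAt x h2).deriv
  rw [h]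
  exact (hf.fderiv_right (m := (⊤ : ℕ∞)) (by simp)).clm_apply contDiff_const

theorem contDiff_pdt {f : ℝ → ℝ → ℝ} (hf : ContDiff ℝ (⊤ : ℕ∞) (Function.uncurry f)) :
    ContDiff ℝ (⊤ : ℕ∞) (Function.uncurry (pdt f)) := by
  have h : Function.uncurry (pdt f) = fun p => fderiv ℝ (Function.uncurry f) p (0, 1) := by
    ext ⟨x, t⟩
    have h1 : HasFDerivAt (Function.uncurry f) (fderiv ℝ (Function.uncurry f) (x, t)) (x, t) :=
      (hf.differentiable (by simp) _).hasFDerivAt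
    have h2 : HasDerivAt (fun s : ℝ => (x, s)) ((0 : ℝ), (1 : ℝ)) t :=
      (hasDerivAt_const t x).prodMk (hasDerivAt_id t)
    exact (h1.comp_hasDerivAt t h2).deriv
  rw [h]
  exact (hf.fderiv_right (m := (⊤ : ℕ∞)) (by simp)).clm_apply contDiff_const

theorem hasDerivAt_pdx {f : ℝ → ℝ → ℝ} (hf : ContDiff ℝ (⊤ : ℕ∞) (Function.uncurry f)) (x t : ℝ) :
    HasDerivAt (fun y => f y t) (pdx f x t) x := by
  have h : ContDiff ℝ (⊤ : ℕ∞) (fun y => f y t) :=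
    hf.comp (contDiff_id.prodMk contDiff_const)
  exact (h.differentiable (by simp) x).hasDerivAt

theorem hasDerivAt_pdt {f : ℝ → ℝ → ℝ} (hf : ContDiff ℝ (⊤ : ℕ∞) (Function.uncurry f)) (x t : ℝ) :
    HasDerivAt (fun s => f x s) (pdt f x t) t := by
  have h : ContDiff ℝ (⊤ : ℕ∞) (fun s => f x s) :=
    hf.comp (contDiff_const.prodMk contDiff_id)
  exact (h.differentiable (by simp) t).hasDerivAt

theorem continuous_slice {f : ℝ → ℝ → ℝ} (hf : ContDiff ℝ (⊤ : ℕ∞) (Function.uncurry f)) (t : ℝ) :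
    Continuous (fun x => f x t) :=
  hf.continuous.comp (continuous_id.prodMk continuous_const)

/-- Differentiation under the integral sign for the energy `(1/2) ∫ (f - g)²`. The time derivative
of the integrand is dominated near `t` by its maximum on `[a, b] × [t - 1, t + 1]`. -/
theorem hasDerivAt_half_integral_sq {f g : ℝ → ℝ → ℝ}
    (hf : ContDiff ℝ (⊤ : ℕ∞) (Function.uncurry f))
    (hg : ContDiff ℝ (⊤ : ℕ∞) (Function.uncurry g)) (a b t : ℝ) :
    HasDerivAt (fun s => (1/2 : ℝ) * ∫ x in a..b, (f x s - g x s) ^ 2)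
      (∫ x in a..b, (f x t - g x t) * (pdt f x t - pdt g x t)) t := by
  have hF'c : Continuous (fun p : ℝ × ℝ =>
      2 * ((f p.1 p.2 - g p.1 p.2) * (pdt f p.1 p.2 - pdt g p.1 p.2))) :=
    continuous_const.mul ((hf.continuous.sub hg.continuous).mul
      ((contDiff_pdt hf).continuous.sub (contDiff_pdt hg).continuous))
  obtain ⟨C, hC⟩ := (isCompact_uIcc (a := a) (b := b)).prod
    (isCompact_Icc (a := t - 1) (b := t + 1)) |>.exists_bound_of_continuousOn hF'c.continuousOn
  have hslice : ∀ s, Continuous (fun x => (f x s - g x s) ^ 2) := fun s =>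
    ((continuous_slice hf s).sub (continuous_slice hg s)).pow 2
  have hF's : Continuous (fun x => 2 * ((f x t - g x t) * (pdt f x t - pdt g x t))) :=
    hF'c.comp (continuous_id.prodMk continuous_const)
  have h := (intervalIntegral.hasDerivAt_integral_of_dominated_loc_of_deriv_le
    (μ := volume) (a := a) (b := b) (x₀ := t) (s := Icc (t - 1) (t + 1)) (bound := fun _ => C)
    (F := fun s x => (f x s - g x s) ^ 2)
    (F' := fun s x => 2 * ((f x s - g x s) * (pdt f x s - pdt g x s)))
    (Icc_mem_nhds (by linarith) (by linarith))
    (Filter.Eventually.of_forall fun s => (hslice s).aestronglyMeasurable)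
    ((hslice t).intervalIntegrable a b)
    hF's.aestronglyMeasurable
    (Filter.Eventually.of_forall fun x hx s hs => hC (x, s) ⟨uIoc_subset_uIcc hx, hs⟩)
    intervalIntegrable_const
    (Filter.Eventually.of_forall fun x _ s _ => by
      have h := ((hasDerivAt_pdt hf x s).fun_sub (hasDerivAt_pdt hg x s)).fun_pow 2
      refine h.congr_deriv ?_
      push_cast
      ring)).2
  refine (h.const_mul (1/2 : ℝ)).congr_deriv ?_
  rw [intervalIntegral.integral_const_mul]
  ring

/-- Integration by parts under homogeneous Neumann conditions for `f - g`. -/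
theorem integral_mul_pdx_pdx {f g : ℝ → ℝ → ℝ}
    (hf : ContDiff ℝ (⊤ : ℕ∞) (Function.uncurry f))
    (hg : ContDiff ℝ (⊤ : ℕ∞) (Function.uncurry g)) {a b t : ℝ}
    (ha : pdx f a t - pdx g a t = 0) (hb : pdx f b t - pdx g b t = 0) :
    ∫ x in a..b, (f x t - g x t) * (pdx (pdx f) x t - pdx (pdx g) x t)
      = -∫ x in a..b, (pdx f x t - pdx g x t) ^ 2 := by
  have hfx := contDiff_pdx hf
  have hgx := contDiff_pdx hg
  have h := intervalIntegral.integral_mul_deriv_eq_deriv_mul (a := a) (b := b)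
    (fun x _ => (hasDerivAt_pdx hf x t).fun_sub (hasDerivAt_pdx hg x t))
    (fun x _ => (hasDerivAt_pdx hfx x t).fun_sub (hasDerivAt_pdx hgx x t))
    (((continuous_slice hfx t).sub (continuous_slice hgx t)).intervalIntegrable a b)
    (((continuous_slice (contDiff_pdx hfx) t).sub
      (continuous_slice (contDiff_pdx hgx) t)).intervalIntegrable a b)
  rw [h, ha, hb]
  simp [pow_two]

/-- Pointwise estimate of `(θ - θ') (Γ θ p² - Γ θ' q²)`. Here `A` and `B` stand for `Γ θ` and
`Γ θ'`, of which only the size of `A` and the Lipschitz bound on `A - B` matter. -/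
theorem source_bound {A B θ θ' p q c₁ c₁₈ c₁₉ c₂₀ : ℝ} (hp : |p| ≤ c₁₈) (hq : |q| ≤ c₁)
    (hA : |A| ≤ c₁₉) (hAB : |A - B| ≤ c₂₀ * |θ - θ'|) :
    (θ - θ') * (A * p ^ 2 - B * q ^ 2)
      ≤ (p - q) ^ 2 + (c₂₀ * c₁ ^ 2 + c₁₉ ^ 2 * (c₁₈ + c₁) ^ 2 / 4) * (θ - θ') ^ 2 := by
  have hA2 : (A * (p + q)) ^ 2 ≤ (c₁₉ * (c₁₈ + c₁)) ^ 2 := by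
    rw [← sq_abs, abs_mul]
    have := abs_add_le p q
    gcongr
    · exact (abs_nonneg A).trans hA
    · linarith
  -- Young's inequality `X Y ≤ X² + Y² / 4` with `X = p - q`, `Y = A (p + q) (θ - θ')`
  have h1 : (θ - θ') * (A * (p + q) * (p - q))
      ≤ (p - q) ^ 2 + (c₁₉ * (c₁₈ + c₁)) ^ 2 / 4 * (θ - θ') ^ 2 := by
    have := mul_le_mul_of_nonneg_right hA2 (sq_nonneg (θ - θ'))
    nlinarith [sq_nonneg ((p - q) - A * (p + q) * (θ - θ') / 2)]
  have h2 : (θ - θ') * ((A - B) * q ^ 2) ≤ c₂₀ * c₁ ^ 2 * (θ - θ') ^ 2 := by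
    have hq2 : q ^ 2 ≤ c₁ ^ 2 := by
      rw [← sq_abs]
      gcongr
    calc (θ - θ') * ((A - B) * q ^ 2)
        ≤ |(θ - θ') * (A - B)| * q ^ 2 := by
          rw [← mul_assoc]
          exact mul_le_mul_of_nonneg_right (le_abs_self _) (sq_nonneg q)
      _ = |θ - θ'| * |A - B| * q ^ 2 := by rw [abs_mul]
      _ ≤ |θ - θ'| * (c₂₀ * |θ - θ'|) * q ^ 2 := by gcongr
      _ = c₂₀ * |θ - θ'| * |θ - θ'| * q ^ 2 := by ring
      _ ≤ c₂₀ * |θ - θ'| * |θ - θ'| * c₁ ^ 2 := by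
          have := (abs_nonneg _).trans hAB
          gcongr
      _ = c₂₀ * c₁ ^ 2 * (θ - θ') ^ 2 := by rw [← sq_abs (θ - θ')]; ring
  linear_combination h1 + h2

/-- Differential inequality for `δ = Θ − Θ̃` under pointwise bounds
(the inequality following (15.28) in the paper). -/
theorem delta_evolution_inequality (a b D T : ℝ) (hab : a < b) (hD : 0 < D) (hT : 0 < T)
    (Γ : ℝ → ℝ) (hΓreg : ContDiff ℝ 1 Γ)
    (u u' Θ Θ' : ℝ → ℝ → ℝ)
    (hu : ContDiff ℝ (⊤ : ℕ∞) (Function.uncurry u)) (hu' : ContDiff ℝ (⊤ : ℕ∞) (Function.uncurry u'))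
    (hΘreg : ContDiff ℝ (⊤ : ℕ∞) (Function.uncurry Θ))
    (hΘ'reg : ContDiff ℝ (⊤ : ℕ∞) (Function.uncurry Θ'))
    (hΘnn : ∀ x ∈ Icc a b, ∀ t ∈ Icc (0:ℝ) T, 0 ≤ Θ x t)
    (hΘ'nn : ∀ x ∈ Icc a b, ∀ t ∈ Icc (0:ℝ) T, 0 ≤ Θ' x t)
    (heq : ∀ x ∈ Ioo a b, ∀ t ∈ Ioo (0:ℝ) T,
      pdt Θ x t = D * pdx (pdx Θ) x t + Γ (Θ x t) * (pdx (pdt u) x t) ^ 2)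
    (heq' : ∀ x ∈ Ioo a b, ∀ t ∈ Ioo (0:ℝ) T,
      pdt Θ' x t = D * pdx (pdx Θ') x t + Γ (Θ' x t) * (pdx (pdt u') x t) ^ 2)
    (hbc : ∀ t ∈ Ioo (0:ℝ) T,
      pdx Θ a t = 0 ∧ pdx Θ b t = 0 ∧ pdx Θ' a t = 0 ∧ pdx Θ' b t = 0)
    (c₁ c₅ c₁₈ c₁₉ c₂₀ : ℝ)
    (hc₁ : 0 < c₁) (hc₅ : 0 < c₅) (hc₁₈ : 0 < c₁₈) (hc₁₉ : 0 < c₁₉) (hc₂₀ : 0 < c₂₀)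
    (hu'xt : ∀ x ∈ Icc a b, ∀ t ∈ Ioo (0:ℝ) T, |pdx (pdt u') x t| ≤ c₁)
    (huxt : ∀ x ∈ Icc a b, ∀ t ∈ Ioo (0:ℝ) T, |pdx (pdt u) x t| ≤ c₁₈)
    (hΘb : ∀ x ∈ Icc a b, ∀ t ∈ Ioo (0:ℝ) T, Θ x t ≤ c₅ ∧ Θ' x t ≤ c₅)
    (hΓb : ∀ ξ ∈ Icc (0:ℝ) c₅, |Γ ξ| ≤ c₁₉ ∧ |deriv Γ ξ| ≤ c₂₀) :
    ∀ t ∈ Ioo (0:ℝ) T, ∃ y' : ℝ,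
      HasDerivAt (fun s => (1/2 : ℝ) * ∫ x in a..b, (Θ x s - Θ' x s) ^ 2) y' t ∧
      y' + D * (∫ x in a..b, (pdx Θ x t - pdx Θ' x t) ^ 2)
        ≤ (∫ x in a..b, (pdx (pdt u) x t - pdx (pdt u') x t) ^ 2)
          + (c₂₀ * c₁ ^ 2 + c₁₉ ^ 2 * (c₁₈ + c₁) ^ 2 / 4)
            * (∫ x in a..b, (Θ x t - Θ' x t) ^ 2) := by
  intro t ht
  obtain ⟨hΘa, hΘb', hΘ'a, hΘ'b'⟩ := hbc t ht
  refine ⟨_, hasDerivAt_half_integral_sq hΘreg hΘ'reg a b t, ?_⟩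
  have hibp := integral_mul_pdx_pdx hΘreg hΘ'reg (a := a) (b := b) (t := t)
    (by rw [hΘa, hΘ'a, sub_zero]) (by rw [hΘb', hΘ'b', sub_zero])
  have hδ : Continuous (fun x => Θ x t - Θ' x t) :=
    (continuous_slice hΘreg t).sub (continuous_slice hΘ'reg t)
  have hδt : Continuous (fun x => pdt Θ x t - pdt Θ' x t) :=
    (continuous_slice (contDiff_pdt hΘreg) t).sub (continuous_slice (contDiff_pdt hΘ'reg) t)
  have hδxx : Continuous (fun x => pdx (pdx Θ) x t - pdx (pdx Θ') x t) :=
    (continuous_slice (contDiff_pdx (contDiff_pdx hΘreg)) t).sub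
      (continuous_slice (contDiff_pdx (contDiff_pdx hΘ'reg)) t)
  have hd : Continuous (fun x => pdx (pdt u) x t - pdx (pdt u') x t) :=
    (continuous_slice (contDiff_pdx (contDiff_pdt hu)) t).sub
      (continuous_slice (contDiff_pdx (contDiff_pdt hu')) t)
  have hI₁ : Continuous (fun x => (Θ x t - Θ' x t) * (pdt Θ x t - pdt Θ' x t)) := hδ.mul hδt
  have hI₂ : Continuous (fun x =>
      D * ((Θ x t - Θ' x t) * (pdx (pdx Θ) x t - pdx (pdx Θ') x t))) :=
    continuous_const.mul (hδ.mul hδxx)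
  have hJ₁ : Continuous (fun x => (pdx (pdt u) x t - pdx (pdt u') x t) ^ 2) := hd.pow 2
  have hJ₂ : Continuous (fun x =>
      (c₂₀ * c₁ ^ 2 + c₁₉ ^ 2 * (c₁₈ + c₁) ^ 2 / 4) * (Θ x t - Θ' x t) ^ 2) :=
    continuous_const.mul (hδ.pow 2)
  have hlip : ∀ ξ ∈ Icc (0:ℝ) c₅, ∀ η ∈ Icc (0:ℝ) c₅, |Γ ξ - Γ η| ≤ c₂₀ * |ξ - η| :=
    fun ξ hξ η hη => Convex.norm_image_sub_le_of_norm_deriv_le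
      (fun x _ => hΓreg.differentiable (by simp) x) (fun x hx => (hΓb x hx).2)
      (convex_Icc 0 c₅) hη hξ
  have hlhs : (∫ x in a..b, (Θ x t - Θ' x t) * (pdt Θ x t - pdt Θ' x t))
        + D * (∫ x in a..b, (pdx Θ x t - pdx Θ' x t) ^ 2)
      = ∫ x in a..b, ((Θ x t - Θ' x t) * (pdt Θ x t - pdt Θ' x t)
        - D * ((Θ x t - Θ' x t) * (pdx (pdx Θ) x t - pdx (pdx Θ') x t))) := by
    rw [intervalIntegral.integral_sub (hI₁.intervalIntegrable a b)
      (hI₂.intervalIntegrable a b),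
      intervalIntegral.integral_const_mul, hibp]
    ring
  rw [hlhs, ← intervalIntegral.integral_const_mul,
    ← intervalIntegral.integral_add (hJ₁.intervalIntegrable a b)
      (hJ₂.intervalIntegrable a b)]
  -- The equations hold only in the open interval, so the integrands are compared there.
  refine intervalIntegral.integral_mono_on_of_le_Ioo hab.le
    ((hI₁.sub hI₂).intervalIntegrable a b) ((hJ₁.add hJ₂).intervalIntegrable a b) fun x hx => ?_
  have hxc := Ioo_subset_Icc_self hx
  have htc := Ioo_subset_Icc_self ht
  have hΘm : Θ x t ∈ Icc 0 c₅ := ⟨hΘnn x hxc t htc, (hΘb x hxc t ht).1⟩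
  have hΘ'm : Θ' x t ∈ Icc 0 c₅ := ⟨hΘ'nn x hxc t htc, (hΘb x hxc t ht).2⟩
  have h := source_bound (huxt x hxc t ht) (hu'xt x hxc t ht) (hΓb _ hΘm).1
    (hlip _ hΘm _ hΘ'm)
  rw [heq x hx t ht, heq' x hx t ht]
  linear_combination h
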